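/- arXiv:2104.04589 — 2 statements merged into one kernel-verified Lean document; each statement's English description precedes it below -/
import Mathlib

section
/- Projection Lemma for PRK: if Γ,P ⊢ Q is derivable in PRK, then Γ,⌊P⌋ ⊢ ⌊Q⌋ is derivable in PRK, where ⌊·⌋ is the classical projection. -/
/-!
The proof is by induction on the derivation of `Γ, P ⊢ Q`, for a stronger claim that projects every
hypothesis at once: if `Δ ⊢ Q` and `Γ ⊢ ⌊R⌋` for all `R ∈ Δ`, then `Γ ⊢ ⌊Q⌋` (`PRK.project`).
A strong proposition entails its projection (`PRK.truncIntro`), so this gives the theorem for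
`Γ := Γ, ⌊P⌋` and `Δ := Γ, P`.

Introduction rules survive projection since their premises are already classical. For absurdity and
for each elimination rule, the corresponding rule with *classical* premises is admissible.
This rests on two facts: `A⊕` and `A⊖` together entail everything (`PRK.explode`), and therefore
classical propositions can be proved by refuting their opposite (`PRK.byContraP`, `PRK.byContraN`).
For instance, to get `A⊕` from `(A∧B)⊕`, assume `A⊖`; then `(A∧B)⁻`, hence `(A∧B)⊖`, which is
contradictory.
-/

/-- Pure propositions: A ::= α | A∧B | A∨B | ¬A -/
inductive PureProp : Type
  | var : ℕ → PureProp
  | conj : PureProp → PureProp → PureProp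
  | disj : PureProp → PureProp → PureProp
  | neg : PureProp → PureProp
  deriving DecidableEq

/-- Moded propositions: A⁺ (sp), A⁻ (sn), A⊕ (cp), A⊖ (cn). -/
inductive MProp : Type
  | sp : PureProp → MProp
  | sn : PureProp → MProp
  | cp : PureProp → MProp
  | cn : PureProp → MProp
  deriving DecidableEq

/-- The opposite P~: flips the sign, keeps the strength. -/
def MProp.opp : MProp → MProp
  | .sp A => .sn A
  | .sn A => .sp A
  | .cp A => .cn A
  | .cn A => .cp A

def MProp.isStrong : MProp → Prop
  | .sp _ => True
  | .sn _ => True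
  | .cp _ => False
  | .cn _ => False

def MProp.isClassical : MProp → Prop
  | .sp _ => False
  | .sn _ => False
  | .cp _ => True
  | .cn _ => True

/-- Derivability in system PRK (natural deduction), Γ a finite set of moded propositions. -/
inductive PRK : Finset MProp → MProp → Prop
  | ax {Γ : Finset MProp} {P : MProp} : P ∈ Γ → PRK Γ P
  | abs {Γ : Finset MProp} {P Q : MProp} :
      P.isStrong → PRK Γ P → PRK Γ P.opp → PRK Γ Q
  | iConjP {Γ A B} : PRK Γ (MProp.cp A) → PRK Γ (MProp.cp B) → PRK Γ (MProp.sp (PureProp.conj A B))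
  | eConjP1 {Γ A B} : PRK Γ (MProp.sp (PureProp.conj A B)) → PRK Γ (MProp.cp A)
  | eConjP2 {Γ A B} : PRK Γ (MProp.sp (PureProp.conj A B)) → PRK Γ (MProp.cp B)
  | iDisjP1 {Γ A B} : PRK Γ (MProp.cp A) → PRK Γ (MProp.sp (PureProp.disj A B))
  | iDisjP2 {Γ A B} : PRK Γ (MProp.cp B) → PRK Γ (MProp.sp (PureProp.disj A B))
  | eDisjP {Γ A B P} : PRK Γ (MProp.sp (PureProp.disj A B)) →
      PRK (insert (MProp.cp A) Γ) P → PRK (insert (MProp.cp B) Γ) P → PRK Γ P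
  | iNegP {Γ A} : PRK Γ (MProp.cn A) → PRK Γ (MProp.sp (PureProp.neg A))
  | eNegP {Γ A} : PRK Γ (MProp.sp (PureProp.neg A)) → PRK Γ (MProp.cn A)
  | icP {Γ A} : PRK (insert (MProp.cn A) Γ) (MProp.sp A) → PRK Γ (MProp.cp A)
  | ecP {Γ A} : PRK Γ (MProp.cp A) → PRK Γ (MProp.cn A) → PRK Γ (MProp.sp A)
  | iDisjN {Γ A B} : PRK Γ (MProp.cn A) → PRK Γ (MProp.cn B) → PRK Γ (MProp.sn (PureProp.disj A B))
  | eDisjN1 {Γ A B} : PRK Γ (MProp.sn (PureProp.disj A B)) → PRK Γ (MProp.cn A)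
  | eDisjN2 {Γ A B} : PRK Γ (MProp.sn (PureProp.disj A B)) → PRK Γ (MProp.cn B)
  | iConjN1 {Γ A B} : PRK Γ (MProp.cn A) → PRK Γ (MProp.sn (PureProp.conj A B))
  | iConjN2 {Γ A B} : PRK Γ (MProp.cn B) → PRK Γ (MProp.sn (PureProp.conj A B))
  | eConjN {Γ A B P} : PRK Γ (MProp.sn (PureProp.conj A B)) →
      PRK (insert (MProp.cn A) Γ) P → PRK (insert (MProp.cn B) Γ) P → PRK Γ P
  | iNegN {Γ A} : PRK Γ (MProp.cp A) → PRK Γ (MProp.sn (PureProp.neg A))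
  | eNegN {Γ A} : PRK Γ (MProp.sn (PureProp.neg A)) → PRK Γ (MProp.cp A)
  | icN {Γ A} : PRK (insert (MProp.cp A) Γ) (MProp.sn A) → PRK Γ (MProp.cn A)
  | ecN {Γ A} : PRK Γ (MProp.cn A) → PRK Γ (MProp.cp A) → PRK Γ (MProp.sn A)

/-- The classical projection ⌊·⌋: keeps the sign, makes the strength classical. -/
def MProp.trunc : MProp → MProp
  | .sp A => .cp A
  | .sn A => .cn A
  | .cp A => .cp A
  | .cn A => .cn A

theorem PRK.weaken {Γ Δ : Finset MProp} {Q : MProp} (h : PRK Γ Q) (hs : Γ ⊆ Δ) : PRK Δ Q := by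
  induction h generalizing Δ with
  | ax h => exact .ax (hs h)
  | abs hP _ _ ih₁ ih₂ => exact .abs hP (ih₁ hs) (ih₂ hs)
  | iConjP _ _ ih₁ ih₂ => exact .iConjP (ih₁ hs) (ih₂ hs)
  | eConjP1 _ ih => exact .eConjP1 (ih hs)
  | eConjP2 _ ih => exact .eConjP2 (ih hs)
  | iDisjP1 _ ih => exact .iDisjP1 (ih hs)
  | iDisjP2 _ ih => exact .iDisjP2 (ih hs)
  | eDisjP _ _ _ ih ih₁ ih₂ =>
    exact .eDisjP (ih hs) (ih₁ (Finset.insert_subset_insert _ hs))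
      (ih₂ (Finset.insert_subset_insert _ hs))
  | iNegP _ ih => exact .iNegP (ih hs)
  | eNegP _ ih => exact .eNegP (ih hs)
  | icP _ ih => exact .icP (ih (Finset.insert_subset_insert _ hs))
  | ecP _ _ ih₁ ih₂ => exact .ecP (ih₁ hs) (ih₂ hs)
  | iDisjN _ _ ih₁ ih₂ => exact .iDisjN (ih₁ hs) (ih₂ hs)
  | eDisjN1 _ ih => exact .eDisjN1 (ih hs)
  | eDisjN2 _ ih => exact .eDisjN2 (ih hs)
  | iConjN1 _ ih => exact .iConjN1 (ih hs)
  | iConjN2 _ ih => exact .iConjN2 (ih hs)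
  | eConjN _ _ _ ih ih₁ ih₂ =>
    exact .eConjN (ih hs) (ih₁ (Finset.insert_subset_insert _ hs))
      (ih₂ (Finset.insert_subset_insert _ hs))
  | iNegN _ ih => exact .iNegN (ih hs)
  | eNegN _ ih => exact .eNegN (ih hs)
  | icN _ ih => exact .icN (ih (Finset.insert_subset_insert _ hs))
  | ecN _ _ ih₁ ih₂ => exact .ecN (ih₁ hs) (ih₂ hs)

theorem PRK.lift {Γ : Finset MProp} {Q : MProp} (R : MProp) (h : PRK Γ Q) :
    PRK (insert R Γ) Q :=
  h.weaken (Finset.subset_insert _ _)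

theorem PRK.hyp {Γ : Finset MProp} {R : MProp} : PRK (insert R Γ) R :=
  .ax (Finset.mem_insert_self _ _)

theorem PRK.truncIntro {Γ : Finset MProp} {Q : MProp} (h : PRK Γ Q) : PRK Γ Q.trunc := by
  cases Q with
  | sp A => exact .icP (h.lift _)
  | sn A => exact .icN (h.lift _)
  | cp A => exact h
  | cn A => exact h

/-- Absurdity for classical premises; the rule `abs` only covers strong ones. -/
theorem PRK.explode {Γ : Finset MProp} {A : PureProp} {Q : MProp} (h₁ : PRK Γ (.cp A))
    (h₂ : PRK Γ (.cn A)) : PRK Γ Q :=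
  .abs (P := .sp A) trivial (.ecP h₁ h₂) (.ecN h₂ h₁)

/-- To prove `A⊕`, assume `A⊖` and derive the opposite of a classical proposition `⌊R⌋` that
already holds. Stated through a projection so that `R` may be a strong compound proposition. -/
theorem PRK.byContraP {Γ : Finset MProp} {A : PureProp} {R : MProp} (h : PRK Γ R.trunc)
    (h' : PRK (insert (.cn A) Γ) R.opp.trunc) : PRK Γ (.cp A) := by
  cases R with
  | sp B => exact .icP (.explode (h.lift _) h')
  | cp B => exact .icP (.explode (h.lift _) h')
  | sn B => exact .icP (.explode h' (h.lift _))
  | cn B => exact .icP (.explode h' (h.lift _))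

/-- The dual of `PRK.byContraP`. -/
theorem PRK.byContraN {Γ : Finset MProp} {A : PureProp} {R : MProp} (h : PRK Γ R.trunc)
    (h' : PRK (insert (.cp A) Γ) R.opp.trunc) : PRK Γ (.cn A) := by
  cases R with
  | sp B => exact .icN (.explode (h.lift _) h')
  | cp B => exact .icN (.explode (h.lift _) h')
  | sn B => exact .icN (.explode h' (h.lift _))
  | cn B => exact .icN (.explode h' (h.lift _))

/-- `PRK.byContraP` and `PRK.byContraN` in one statement, for a classical conclusion `⌊P⌋` of
either sign. -/
theorem PRK.byContra {Γ : Finset MProp} {P S : MProp} (h : PRK Γ S.trunc)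
    (h' : PRK (insert P.trunc.opp Γ) S.opp.trunc) : PRK Γ P.trunc := by
  cases P with
  | sp A => exact .byContraP h h'
  | cp A => exact .byContraP h h'
  | sn A => exact .byContraN h h'
  | cn A => exact .byContraN h h'

theorem MProp.trunc_opp_opp (P : MProp) : P.trunc.opp.opp.trunc = P.trunc := by
  cases P <;> rfl

theorem MProp.trunc_trunc_opp (P : MProp) : P.trunc.opp.trunc = P.trunc.opp := by
  cases P <;> rfl

/-- Contraposition: from `Γ, A⊕ ⊢ ⌊P⌋` infer `Γ, ⌊P⌋~ ⊢ A⊖`. -/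
theorem PRK.contraP {Γ : Finset MProp} {A : PureProp} {P : MProp}
    (h : PRK (insert (.cp A) Γ) P.trunc) : PRK (insert P.trunc.opp Γ) (.cn A) := by
  refine .byContraN (R := P.trunc.opp) ?_ ?_
  · rw [MProp.trunc_trunc_opp]
    exact .hyp
  · rw [MProp.trunc_opp_opp]
    exact h.weaken (Finset.insert_subset_insert _ (Finset.subset_insert _ _))

/-- Contraposition: from `Γ, A⊖ ⊢ ⌊P⌋` infer `Γ, ⌊P⌋~ ⊢ A⊕`. -/
theorem PRK.contraN {Γ : Finset MProp} {A : PureProp} {P : MProp}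
    (h : PRK (insert (.cn A) Γ) P.trunc) : PRK (insert P.trunc.opp Γ) (.cp A) := by
  refine .byContraP (R := P.trunc.opp) ?_ ?_
  · rw [MProp.trunc_trunc_opp]
    exact .hyp
  · rw [MProp.trunc_opp_opp]
    exact h.weaken (Finset.insert_subset_insert _ (Finset.subset_insert _ _))

/-- Hypotheses that hold up to projection still do after adding a classical hypothesis `R`
(classicality is expressed by `⌊R⌋ = R`) on both sides. -/
theorem PRK.extend {Γ Δ : Finset MProp} {R : MProp} (hR : R.trunc = R)
    (H : ∀ S ∈ Δ, PRK Γ S.trunc) : ∀ S ∈ insert R Δ, PRK (insert R Γ) S.trunc := by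
  intro S hS
  rcases Finset.mem_insert.1 hS with rfl | hS
  · rw [hR]
    exact .hyp
  · exact (H S hS).lift _

/-- Derivability is preserved when all hypotheses and the conclusion are projected. -/
theorem PRK.project {Γ Δ : Finset MProp} {Q : MProp} (h : PRK Δ Q)
    (H : ∀ R ∈ Δ, PRK Γ R.trunc) : PRK Γ Q.trunc := by
  induction h generalizing Γ with
  | ax h => exact H _ h
  | @abs Δ P Q hP _ _ ih₁ ih₂ =>
    cases P with
    | sp A => exact .explode (ih₁ H) (ih₂ H)
    | sn A => exact .explode (ih₂ H) (ih₁ H)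
    | cp A => exact hP.elim
    | cn A => exact hP.elim
  | iConjP _ _ ih₁ ih₂ => exact (PRK.iConjP (ih₁ H) (ih₂ H)).truncIntro
  | eConjP1 _ ih => exact .byContraP (ih H) (PRK.iConjN1 .hyp).truncIntro
  | eConjP2 _ ih => exact .byContraP (ih H) (PRK.iConjN2 .hyp).truncIntro
  | iDisjP1 _ ih => exact (PRK.iDisjP1 (ih H)).truncIntro
  | iDisjP2 _ ih => exact (PRK.iDisjP2 (ih H)).truncIntro
  | eDisjP _ _ _ ih ih₁ ih₂ =>
    exact .byContra (ih H)
      (PRK.iDisjN (ih₁ (.extend rfl H)).contraP (ih₂ (.extend rfl H)).contraP).truncIntro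
  | iNegP _ ih => exact (PRK.iNegP (ih H)).truncIntro
  | eNegP _ ih => exact .byContraN (ih H) (PRK.iNegN .hyp).truncIntro
  | icP _ ih => exact .icP (.ecP (ih (.extend rfl H)) .hyp)
  | ecP _ _ ih₁ _ => exact ih₁ H
  | iDisjN _ _ ih₁ ih₂ => exact (PRK.iDisjN (ih₁ H) (ih₂ H)).truncIntro
  | eDisjN1 _ ih => exact .byContraN (ih H) (PRK.iDisjP1 .hyp).truncIntro
  | eDisjN2 _ ih => exact .byContraN (ih H) (PRK.iDisjP2 .hyp).truncIntro
  | iConjN1 _ ih => exact (PRK.iConjN1 (ih H)).truncIntro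
  | iConjN2 _ ih => exact (PRK.iConjN2 (ih H)).truncIntro
  | eConjN _ _ _ ih ih₁ ih₂ =>
    exact .byContra (ih H)
      (PRK.iConjP (ih₁ (.extend rfl H)).contraN (ih₂ (.extend rfl H)).contraN).truncIntro
  | iNegN _ ih => exact (PRK.iNegN (ih H)).truncIntro
  | eNegN _ ih => exact .byContraP (ih H) (PRK.iNegP .hyp).truncIntro
  | icN _ ih => exact .icN (.ecN (ih (.extend rfl H)) .hyp)
  | ecN _ _ ih₁ _ => exact ih₁ H

/-- Projection lemma for PRK. -/
theorem projection_lemma (Γ : Finset MProp) (P Q : MProp)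
    (h : PRK (insert P Γ) Q) : PRK (insert P.trunc Γ) Q.trunc := by
  refine h.project fun R hR => ?_
  rcases Finset.mem_insert.1 hR with rfl | hR
  · exact .hyp
  · exact (PRK.ax (Finset.mem_insert_of_mem hR)).truncIntro
end

section
/- Rule of classical forcing: in any Kripke model for PRK, for every world w and pure proposition A: (1) w ⊩ A⊕ if and only if for all w' ≥ w, w' ⊩ A⊖ implies w' ⊩ A⁺; and (2) w ⊩ A⊖ if and only if for all w' ≥ w, w' ⊩ A⊕ implies w' ⊩ A⁻. -/
/-- A Kripke model for PRK. -/
structure KripkeModel (W : Type) where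
  le : W → W → Prop
  le_refl : ∀ w, le w w
  le_trans : ∀ {a b c}, le a b → le b c → le a c
  le_antisymm : ∀ {a b}, le a b → le b a → a = b
  Vp : W → ℕ → Prop
  Vn : W → ℕ → Prop
  monoP : ∀ {w w'}, le w w' → ∀ {a}, Vp w a → Vp w' a
  monoN : ∀ {w w'}, le w w' → ∀ {a}, Vn w a → Vn w' a
  stab : ∀ w a, ∃ w', le w w' ∧ Xor' (Vp w' a) (Vn w' a)

def PureProp.size : PureProp → ℕ
  | .var _ => 1
  | .conj A B => 1 + A.size + B.size
  | .disj A B => 1 + A.size + B.size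
  | .neg A => 1 + A.size

def MProp.meas : MProp → ℕ
  | .sp A => 2 * A.size
  | .sn A => 2 * A.size
  | .cp A => 2 * A.size + 1
  | .cn A => 2 * A.size + 1

/-- The forcing relation w ⊩ P, defined by recursion on the measure. -/
def Forces {W : Type} (M : KripkeModel W) : W → MProp → Prop
  | w, .sp (.var a) => M.Vp w a
  | w, .sn (.var a) => M.Vn w a
  | w, .sp (.conj A B) => Forces M w (.cp A) ∧ Forces M w (.cp B)
  | w, .sn (.conj A B) => Forces M w (.cn A) ∨ Forces M w (.cn B)
  | w, .sp (.disj A B) => Forces M w (.cp A) ∨ Forces M w (.cp B)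
  | w, .sn (.disj A B) => Forces M w (.cn A) ∧ Forces M w (.cn B)
  | w, .sp (.neg A) => Forces M w (.cn A)
  | w, .sn (.neg A) => Forces M w (.cp A)
  | w, .cp A => ∀ w', M.le w w' → ¬ Forces M w' (.sn A)
  | w, .cn A => ∀ w', M.le w w' → ¬ Forces M w' (.sp A)
termination_by w P => P.meas
decreasing_by all_goals simp [MProp.meas, PureProp.size] <;> omega

section Forcing

variable {W : Type} (M : KripkeModel W)

theorem forces_cp {w : W} {A : PureProp} :
    Forces M w (.cp A) ↔ ∀ w', M.le w w' → ¬ Forces M w' (.sn A) := by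
  rw [Forces]

theorem forces_cn {w : W} {A : PureProp} :
    Forces M w (.cn A) ↔ ∀ w', M.le w w' → ¬ Forces M w' (.sp A) := by
  rw [Forces]

theorem forces_cp_mono {w w' : W} (h : M.le w w') {A : PureProp}
    (hA : Forces M w (.cp A)) : Forces M w' (.cp A) := by
  rw [forces_cp] at hA ⊢
  exact fun v hv => hA v (M.le_trans h hv)

theorem forces_cn_mono {w w' : W} (h : M.le w w') {A : PureProp}
    (hA : Forces M w (.cn A)) : Forces M w' (.cn A) := by
  rw [forces_cn] at hA ⊢
  exact fun v hv => hA v (M.le_trans h hv)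

/-- No induction is needed: strong forcing of a compound proposition is a positive combination of
classical forcings, which are monotone by definition. -/
theorem forces_sp_mono {w w' : W} (h : M.le w w') {A : PureProp}
    (hA : Forces M w (.sp A)) : Forces M w' (.sp A) := by
  cases A <;> rw [Forces] at hA ⊢
  · exact M.monoP h hA
  · exact hA.imp (forces_cp_mono M h) (forces_cp_mono M h)
  · exact hA.imp (forces_cp_mono M h) (forces_cp_mono M h)
  · exact forces_cn_mono M h hA

theorem forces_sn_mono {w w' : W} (h : M.le w w') {A : PureProp}
    (hA : Forces M w (.sn A)) : Forces M w' (.sn A) := by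
  cases A <;> rw [Forces] at hA ⊢
  · exact M.monoN h hA
  · exact hA.imp (forces_cn_mono M h) (forces_cn_mono M h)
  · exact hA.imp (forces_cn_mono M h) (forces_cn_mono M h)
  · exact forces_cp_mono M h hA

/-- No world forces both `A⁺` and `A⁻`. -/
def Consistent (A : PureProp) : Prop :=
  ∀ w, Forces M w (.sp A) → Forces M w (.sn A) → False

/-- Above every world there is one that forces `A⁺` or `A⁻`. -/
def Decided (A : PureProp) : Prop :=
  ∀ w, ∃ w', M.le w w' ∧ (Forces M w' (.sp A) ∨ Forces M w' (.sn A))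

variable {M}

theorem Decided.not_cp_and_cn {A : PureProp} (hd : Decided M A) {w : W}
    (hp : Forces M w (.cp A)) (hn : Forces M w (.cn A)) : False := by
  rw [forces_cp] at hp
  rw [forces_cn] at hn
  obtain ⟨v, hv, h | h⟩ := hd w
  · exact hn v hv h
  · exact hp v hv h

theorem Consistent.cp_of_sp {A : PureProp} (hc : Consistent M A) {w : W}
    (h : Forces M w (.sp A)) : Forces M w (.cp A) :=
  (forces_cp M).2 fun v hv hn => hc v (forces_sp_mono M hv h) hn

theorem Consistent.cn_of_sn {A : PureProp} (hc : Consistent M A) {w : W}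
    (h : Forces M w (.sn A)) : Forces M w (.cn A) :=
  (forces_cn M).2 fun v hv hp => hc v hp (forces_sn_mono M hv h)

/-- If `A⊕` fails at `w`, it is because `A⁻` holds at some later world, and there `A⊖` holds. -/
theorem Consistent.cp_or_exists_cn {A : PureProp} (hc : Consistent M A) (w : W) :
    Forces M w (.cp A) ∨ ∃ w', M.le w w' ∧ Forces M w' (.cn A) := by
  by_cases h : ∃ v, M.le w v ∧ Forces M v (.sn A)
  · obtain ⟨v, hv, hn⟩ := h
    exact .inr ⟨v, hv, hc.cn_of_sn hn⟩
  · exact .inl ((forces_cp M).2 fun v hv hn => h ⟨v, hv, hn⟩)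

theorem Consistent.cn_or_exists_cp {A : PureProp} (hc : Consistent M A) (w : W) :
    Forces M w (.cn A) ∨ ∃ w', M.le w w' ∧ Forces M w' (.cp A) := by
  by_cases h : ∃ v, M.le w v ∧ Forces M v (.sp A)
  · obtain ⟨v, hv, hp⟩ := h
    exact .inr ⟨v, hv, hc.cp_of_sp hp⟩
  · exact .inl ((forces_cn M).2 fun v hv hp => h ⟨v, hv, hp⟩)

variable (M)

theorem consistent_and_decided (A : PureProp) : Consistent M A ∧ Decided M A := by
  induction A with
  | var a =>
    refine ⟨fun w hp hn => ?_, fun w => ?_⟩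
    -- Once both hold, both persist, so no later world can stabilize `a`.
    · rw [Forces.eq_def] at hp hn
      obtain ⟨v, hv, h | h⟩ := M.stab w a
      · exact h.2 (M.monoN hv hn)
      · exact h.2 (M.monoP hv hp)
    · obtain ⟨v, hv, h⟩ := M.stab w a
      refine ⟨v, hv, ?_⟩
      rw [Forces, Forces]
      exact h.imp And.left And.left
  | conj A B ihA ihB =>
    refine ⟨fun w hp hn => ?_, fun w => ?_⟩
    · rw [Forces.eq_def] at hp hn
      rcases hn with hn | hn
      · exact ihA.2.not_cp_and_cn hp.1 hn
      · exact ihB.2.not_cp_and_cn hp.2 hn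
    · simp only [Forces.eq_3, Forces.eq_4]
      rcases ihA.1.cp_or_exists_cn w with hA | ⟨v, hv, hA⟩
      · rcases ihB.1.cp_or_exists_cn w with hB | ⟨v, hv, hB⟩
        · exact ⟨w, M.le_refl w, .inl ⟨hA, hB⟩⟩
        · exact ⟨v, hv, .inr (.inr hB)⟩
      · exact ⟨v, hv, .inr (.inl hA)⟩
  | disj A B ihA ihB =>
    refine ⟨fun w hp hn => ?_, fun w => ?_⟩
    · rw [Forces.eq_def] at hp hn
      rcases hp with hp | hp
      · exact ihA.2.not_cp_and_cn hp hn.1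
      · exact ihB.2.not_cp_and_cn hp hn.2
    · simp only [Forces.eq_5, Forces.eq_6]
      rcases ihA.1.cn_or_exists_cp w with hA | ⟨v, hv, hA⟩
      · rcases ihB.1.cn_or_exists_cp w with hB | ⟨v, hv, hB⟩
        · exact ⟨w, M.le_refl w, .inr ⟨hA, hB⟩⟩
        · exact ⟨v, hv, .inl (.inr hB)⟩
      · exact ⟨v, hv, .inl (.inl hA)⟩
  | neg A ih =>
    refine ⟨fun w hp hn => ?_, fun w => ?_⟩
    · rw [Forces.eq_def] at hp hn
      exact ih.2.not_cp_and_cn hn hp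
    · simp only [Forces.eq_7, Forces.eq_8]
      rcases ih.1.cp_or_exists_cn w with h | ⟨v, hv, h⟩
      · exact ⟨w, M.le_refl w, .inr h⟩
      · exact ⟨v, hv, .inl h⟩

end Forcing

/-- Rule of classical forcing. -/
theorem rule_of_classical_forcing {W : Type} (M : KripkeModel W) (w : W) (A : PureProp) :
    (Forces M w (MProp.cp A) ↔
      ∀ w', M.le w w' → Forces M w' (MProp.cn A) → Forces M w' (MProp.sp A)) ∧
    (Forces M w (MProp.cn A) ↔
      ∀ w', M.le w w' → Forces M w' (MProp.cp A) → Forces M w' (MProp.sn A)) := by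
  obtain ⟨hc, hd⟩ := consistent_and_decided M A
  refine ⟨⟨fun h w' hw hn => ?_, fun h => ?_⟩, ⟨fun h w' hw hp => ?_, fun h => ?_⟩⟩
  · exact (hd.not_cp_and_cn (forces_cp_mono M hw h) hn).elim
  · exact (forces_cp M).2 fun v hv hn => hc v (h v hv (hc.cn_of_sn hn)) hn
  · exact (hd.not_cp_and_cn hp (forces_cn_mono M hw h)).elim
  · exact (forces_cn M).2 fun v hv hp => hc v hp (h v hv (hc.cp_of_sp hp))
end
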